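/- For every integer m ≥ 2 and every integer α ≥ 2, there exists a language K over a binary alphabet that is accepted by a permutation automaton and satisfies asc(K) = m and asc(K^R) = α. Equivalently, α ∈ g^{asc}_{R,PFA}(m) for all m ≥ 2 and α ≥ 2. -/

import Mathlib

/-!
The accepting-state complexity of a regular language `L` is the number of its left quotients by
words of `L` (`asc_eq_ncard`): these are the accepting states of the Myhill–Nerode automaton, and
in every DFA for `L` each of them is the language accepted from some accepting state.

On `ZMod a × ZMod m` let `rowShift i` rotate the row `v = 0` by `i` and let `colShift j` rotate the
column `u = 0` by `j`. These are two cyclic groups `H`, `J` of permutations of orders `a` and `m`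
whose supports meet in one point only. Consider the language `K` of the words whose action
(the letter `true` acts as `rowShift 1`, the letter `false` as `colShift 1`) lies in
`S = {colShift j * rowShift i}`. As `S` is invariant under `H` on the right, the quotient of `K` by
a word acting as `colShift j * rowShift i` depends only on `j`; as `S` is invariant under `J` on
the left, the corresponding quotient of the reversal depends only on `i`. Different `j` (resp. `i`)
give different quotients because `rowShift i * colShift j ∉ S` whenever `i ≠ 0` and `j ≠ 0`
(`rowShift_mul_colShift`). Hence `asc K = m` and `asc K.reverse = a`.
-/

/-- Accepting-state complexity: the minimum number of accepting (final) states among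
all complete DFAs (with finite state set) accepting the language `L`. -/
noncomputable def asc {α : Type} (L : Language α) : ℕ :=
  sInf {k | ∃ (σ : Type) (_ : Finite σ) (M : DFA α σ),
    M.accepts = L ∧ Nat.card M.accept = k}

/-- The accepting-state spectrum of reversal for permutation automata:
`g^asc_{R,PFA}(m)` is the set of all `α` such that some language `K` (over some
alphabet) accepted by a permutation automaton (a finite complete DFA all of whose
letters act bijectively on the states) satisfies `asc(K) = m` and `asc(K^R) = α`. -/
def revSpectrum (m : ℕ) : Set ℕ :=
  {a | ∃ (α σ : Type) (_ : Finite σ) (M : DFA α σ),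
    (∀ c : α, Function.Bijective (fun q => M.step q c)) ∧
    asc M.accepts = m ∧ asc M.accepts.reverse = a}

/-- Accepting-state complexity counts the left quotients by words of the language. -/
theorem asc_eq_ncard {α : Type} (L : Language α) (hL : L.IsRegular) :
    asc L = (L.leftQuotient '' {w | w ∈ L}).ncard := by
  apply le_antisymm
  · apply Nat.sInf_le
    have hfin : Finite (Set.range L.leftQuotient) := hL.finite_range_leftQuotient
    refine ⟨_, hfin, L.toDFA, L.accepts_toDFA, ?_⟩
    rw [Nat.card_coe_set_eq, ← Set.ncard_image_of_injective _ Subtype.val_injective]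
    congr 1
    ext q
    constructor
    · rintro ⟨⟨_, w, rfl⟩, hw, rfl⟩
      refine ⟨w, ?_, rfl⟩
      simpa using hw
    · rintro ⟨w, hw, rfl⟩
      exact ⟨⟨_, w, rfl⟩, by simpa using hw, rfl⟩
  · apply le_csInf
    · obtain ⟨σ, hσ, M, hM⟩ := hL
      exact ⟨_, σ, inferInstance, M, hM, rfl⟩
    · rintro k ⟨σ, hσ, M, rfl, rfl⟩
      rw [Nat.card_coe_set_eq]
      refine le_trans (Set.ncard_le_ncard (t := M.acceptsFrom '' M.accept) ?_ (Set.toFinite _))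
        (Set.ncard_image_le (Set.toFinite _))
      rintro _ ⟨w, hw, rfl⟩
      exact ⟨M.eval w, hw, (Language.leftQuotient_accepts_apply M w).symm⟩

theorem asc_eq_card {α ι : Type} (L : Language α) (hL : L.IsRegular) (Q : ι → Language α)
    (hQ : Function.Injective Q) (h : L.leftQuotient '' {w | w ∈ L} = Set.range Q) :
    asc L = Nat.card ι := by
  rw [asc_eq_ncard L hL, h, ← Set.image_univ, Set.ncard_image_of_injective _ hQ, Set.ncard_univ]

/-- Rotation by `i` of the row `v = 0`; all other points are fixed. -/
def rowShift (a m : ℕ) (i : ZMod a) : Equiv.Perm (ZMod a × ZMod m) where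
  toFun p := if p.2 = 0 then (p.1 + i, p.2) else p
  invFun p := if p.2 = 0 then (p.1 - i, p.2) else p
  left_inv p := by by_cases h : p.2 = 0 <;> simp [h, Prod.ext_iff]
  right_inv p := by by_cases h : p.2 = 0 <;> simp [h, Prod.ext_iff]

/-- Rotation by `j` of the column `u = 0`; all other points are fixed. -/
def colShift (a m : ℕ) (j : ZMod m) : Equiv.Perm (ZMod a × ZMod m) where
  toFun p := if p.1 = 0 then (p.1, p.2 + j) else p
  invFun p := if p.1 = 0 then (p.1, p.2 - j) else p
  left_inv p := by by_cases h : p.1 = 0 <;> simp [h, Prod.ext_iff]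
  right_inv p := by by_cases h : p.1 = 0 <;> simp [h, Prod.ext_iff]

section

variable {a m : ℕ}

theorem rowShift_apply (i : ZMod a) (p : ZMod a × ZMod m) :
    rowShift a m i p = if p.2 = 0 then (p.1 + i, p.2) else p := rfl

theorem colShift_apply (j : ZMod m) (p : ZMod a × ZMod m) :
    colShift a m j p = if p.1 = 0 then (p.1, p.2 + j) else p := rfl

theorem rowShift_zero : rowShift a m 0 = 1 := by
  ext p <;> simp [rowShift_apply]

theorem colShift_zero : colShift a m 0 = 1 := by
  ext p <;> simp [colShift_apply]

theorem rowShift_add (i k : ZMod a) :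
    rowShift a m (i + k) = rowShift a m i * rowShift a m k := by
  refine Equiv.ext fun p => ?_
  by_cases h : p.2 = 0 <;> simp [rowShift_apply, h, add_comm, add_left_comm]

theorem colShift_add (j k : ZMod m) :
    colShift a m (j + k) = colShift a m j * colShift a m k := by
  refine Equiv.ext fun p => ?_
  by_cases h : p.1 = 0 <;> simp [colShift_apply, h, add_comm, add_left_comm]

/-- The set of products `colShift j * rowShift i`: first a row rotation, then a column rotation. -/
def shiftProducts (a m : ℕ) : Set (Equiv.Perm (ZMod a × ZMod m)) :=
  {g | ∃ i j, g = colShift a m j * rowShift a m i}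

/-- The wrong order: if `i ≠ 0` and `j ≠ 0`, then `rowShift i * colShift j` moves `(0, -j)` out of
the column `u = 0`, which no element of `shiftProducts` does. -/
theorem rowShift_mul_colShift {i : ZMod a} {j : ZMod m} (hj : j ≠ 0)
    (h : rowShift a m i * colShift a m j ∈ shiftProducts a m) : i = 0 := by
  obtain ⟨i', j', h⟩ := h
  have := congrArg (fun g => (g (0, -j)).1) h
  simpa [rowShift_apply, colShift_apply, hj] using this

theorem mul_rowShift_mem (g : Equiv.Perm (ZMod a × ZMod m)) (i : ZMod a) :
    g * rowShift a m i ∈ shiftProducts a m ↔ g ∈ shiftProducts a m := by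
  constructor
  · rintro ⟨i', j, h⟩
    refine ⟨i' + -i, j, ?_⟩
    rw [rowShift_add, ← mul_assoc, ← h, mul_assoc, ← rowShift_add, add_neg_cancel, rowShift_zero,
      mul_one]
  · rintro ⟨i', j, rfl⟩
    exact ⟨i' + i, j, by rw [rowShift_add, mul_assoc]⟩

theorem colShift_mul_mem (g : Equiv.Perm (ZMod a × ZMod m)) (j : ZMod m) :
    colShift a m j * g ∈ shiftProducts a m ↔ g ∈ shiftProducts a m := by
  constructor
  · rintro ⟨i, j', h⟩
    refine ⟨i, -j + j', ?_⟩
    rw [colShift_add, mul_assoc, ← h, ← mul_assoc, ← colShift_add, neg_add_cancel, colShift_zero,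
      one_mul]
  · rintro ⟨i, j', rfl⟩
    exact ⟨i, j + j', by rw [colShift_add, mul_assoc]⟩

/-- The permutation by which a letter acts. -/
def letterPerm (a m : ℕ) (c : Bool) : Equiv.Perm (ZMod a × ZMod m) :=
  if c then rowShift a m 1 else colShift a m 1

/-- The permutation by which a word acts, its first letter being applied first. -/
def wordPerm (a m : ℕ) (w : List Bool) : Equiv.Perm (ZMod a × ZMod m) :=
  (w.reverse.map (letterPerm a m)).prod

theorem wordPerm_append (u v : List Bool) :
    wordPerm a m (u ++ v) = wordPerm a m v * wordPerm a m u := by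
  simp [wordPerm]

theorem exists_word_rowShift [NeZero a] (i : ZMod a) : ∃ w, wordPerm a m w = rowShift a m i := by
  have key : ∀ n : ℕ, rowShift a m 1 ^ n = rowShift a m n := by
    intro n
    induction n with
    | zero => simp [rowShift_zero]
    | succ n ih => rw [pow_succ, ih, Nat.cast_succ, rowShift_add]
  refine ⟨List.replicate i.val true, ?_⟩
  simp [wordPerm, letterPerm, key]

theorem exists_word_colShift [NeZero m] (j : ZMod m) : ∃ w, wordPerm a m w = colShift a m j := by
  have key : ∀ n : ℕ, colShift a m 1 ^ n = colShift a m n := by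
    intro n
    induction n with
    | zero => simp [colShift_zero]
    | succ n ih => rw [pow_succ, ih, Nat.cast_succ, colShift_add]
  refine ⟨List.replicate j.val false, ?_⟩
  simp [wordPerm, letterPerm, key]

/-- The permutation automaton whose states are the permutations of `ZMod a × ZMod m`; it computes
`wordPerm` and accepts on `shiftProducts`. -/
def shiftDFA (a m : ℕ) : DFA Bool (Equiv.Perm (ZMod a × ZMod m)) where
  step g c := letterPerm a m c * g
  start := 1
  accept := shiftProducts a m

theorem shiftDFA_evalFrom (g : Equiv.Perm (ZMod a × ZMod m)) (w : List Bool) :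
    (shiftDFA a m).evalFrom g w = wordPerm a m w * g := by
  induction w generalizing g with
  | nil => simp [wordPerm]
  | cons c w ih =>
    rw [DFA.evalFrom_cons, ih, ← List.singleton_append, wordPerm_append, mul_assoc]
    simp [shiftDFA, wordPerm]

theorem mem_shiftDFA_accepts (w : List Bool) :
    w ∈ (shiftDFA a m).accepts ↔ wordPerm a m w ∈ shiftProducts a m := by
  rw [DFA.mem_accepts, DFA.eval, shiftDFA_evalFrom]
  simp [shiftDFA]

theorem shiftDFA_isRegular [NeZero a] [NeZero m] : (shiftDFA a m).accepts.IsRegular :=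
  Language.isRegular_iff.mpr ⟨_, inferInstance, shiftDFA a m, rfl⟩

theorem asc_shiftDFA [NeZero m] [Fact (1 < a)] : asc (shiftDFA a m).accepts = m := by
  have : NeZero a := ⟨by have := Fact.out (p := 1 < a); omega⟩
  have h := asc_eq_card (shiftDFA a m).accepts shiftDFA_isRegular
    (fun j : ZMod m => {u | wordPerm a m u * colShift a m j ∈ shiftProducts a m}) ?_ ?_
  · rw [h, Nat.card_zmod]
  · intro j j' hjj
    by_contra hne
    -- A word acting as `rowShift 1 * colShift (-j)` separates the quotients for `j` and `j'`.
    obtain ⟨v, hv⟩ := exists_word_colShift (a := a) (-j)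
    obtain ⟨w, hw⟩ := exists_word_rowShift (m := m) (1 : ZMod a)
    have hiff := Set.ext_iff.mp hjj (v ++ w)
    simp only [Set.mem_ofPred_eq, wordPerm_append, hv, hw, mul_assoc, ← colShift_add] at hiff
    have h1 := hiff.mp ⟨1, 0, by simp [colShift_zero]⟩
    exact one_ne_zero (rowShift_mul_colShift
      (fun h0 => hne (neg_add_eq_zero.mp h0)) h1)
  · have hquot : ∀ w i j, wordPerm a m w = colShift a m j * rowShift a m i →
        (shiftDFA a m).accepts.leftQuotient w =
          {u | wordPerm a m u * colShift a m j ∈ shiftProducts a m} := by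
      intro w i j hw
      refine Set.ext fun u => ?_
      change w ++ u ∈ (shiftDFA a m).accepts ↔ _
      rw [mem_shiftDFA_accepts, wordPerm_append, hw, ← mul_assoc, mul_rowShift_mem]
      rfl
    ext q
    constructor
    · rintro ⟨w, hw, rfl⟩
      obtain ⟨i, j, hij⟩ := (mem_shiftDFA_accepts w).mp hw
      exact ⟨j, (hquot w i j hij).symm⟩
    · rintro ⟨j, rfl⟩
      obtain ⟨w, hw⟩ := exists_word_colShift (a := a) j
      have hw' : wordPerm a m w = colShift a m j * rowShift a m 0 := by
        rw [hw, rowShift_zero, mul_one]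
      exact ⟨w, (mem_shiftDFA_accepts w).mpr ⟨0, j, hw'⟩, hquot w 0 j hw'⟩

theorem asc_shiftDFA_reverse [NeZero a] [Fact (1 < m)] :
    asc (shiftDFA a m).accepts.reverse = a := by
  have : NeZero m := ⟨by have := Fact.out (p := 1 < m); omega⟩
  have h := asc_eq_card (shiftDFA a m).accepts.reverse shiftDFA_isRegular.reverse
    (fun i : ZMod a => {u | rowShift a m i * wordPerm a m u.reverse ∈ shiftProducts a m}) ?_ ?_
  · rw [h, Nat.card_zmod]
  · intro i i' hii
    by_contra hne
    -- The reversal of a word acting as `rowShift (-i) * colShift 1` separates the quotients.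
    obtain ⟨v, hv⟩ := exists_word_colShift (a := a) (1 : ZMod m)
    obtain ⟨w, hw⟩ := exists_word_rowShift (m := m) (-i)
    have hiff := Set.ext_iff.mp hii (v ++ w).reverse
    simp only [Set.mem_ofPred_eq, List.reverse_reverse, wordPerm_append, hv, hw, ← mul_assoc,
      ← rowShift_add] at hiff
    have h1 := hiff.mp ⟨0, 1, by simp [rowShift_zero]⟩
    exact hne (add_neg_eq_zero.mp (rowShift_mul_colShift one_ne_zero h1)).symm
  · have hquot : ∀ w i j, wordPerm a m w.reverse = colShift a m j * rowShift a m i →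
        (shiftDFA a m).accepts.reverse.leftQuotient w =
          {u | rowShift a m i * wordPerm a m u.reverse ∈ shiftProducts a m} := by
      intro w i j hw
      refine Set.ext fun u => ?_
      change w ++ u ∈ (shiftDFA a m).accepts.reverse ↔ _
      rw [Language.mem_reverse, List.reverse_append, mem_shiftDFA_accepts, wordPerm_append, hw,
        mul_assoc, colShift_mul_mem]
      rfl
    ext q
    constructor
    · rintro ⟨w, hw, rfl⟩
      obtain ⟨i, j, hij⟩ := (mem_shiftDFA_accepts w.reverse).mp hw
      exact ⟨i, (hquot w i j hij).symm⟩
    · rintro ⟨i, rfl⟩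
      obtain ⟨w, hw⟩ := exists_word_rowShift (m := m) i
      have hw' : wordPerm a m w.reverse.reverse = colShift a m 0 * rowShift a m i := by
        rw [List.reverse_reverse, hw, colShift_zero, one_mul]
      exact ⟨w.reverse, (mem_shiftDFA_accepts _).mpr ⟨i, 0, hw'⟩, hquot w.reverse i 0 hw'⟩

end

/-- For all `m ≥ 2` and `α ≥ 2` there is a language `K` over a
binary alphabet accepted by a permutation automaton with `asc(K) = m` and
`asc(K^R) = α`; equivalently, `α ∈ g^asc_{R,PFA}(m)`. -/
theorem stmt16 (m a : ℕ) (hm : 2 ≤ m) (ha : 2 ≤ a) :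
    (∃ (σ : Type) (_ : Finite σ) (M : DFA Bool σ),
      (∀ c : Bool, Function.Bijective (fun q => M.step q c)) ∧
      asc M.accepts = m ∧ asc M.accepts.reverse = a) ∧
    a ∈ revSpectrum m := by
  have : NeZero a := ⟨by omega⟩
  have : NeZero m := ⟨by omega⟩
  have : Fact (1 < a) := ⟨ha⟩
  have : Fact (1 < m) := ⟨hm⟩
  have main : ∃ (σ : Type) (_ : Finite σ) (M : DFA Bool σ),
      (∀ c : Bool, Function.Bijective (fun q => M.step q c)) ∧
      asc M.accepts = m ∧ asc M.accepts.reverse = a :=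
    ⟨_, inferInstance, shiftDFA a m, fun c => Group.mulLeft_bijective (letterPerm a m c),
      asc_shiftDFA, asc_shiftDFA_reverse⟩
  exact ⟨main, Bool, main⟩
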